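/- arXiv:1704.04830 — 3 statements merged into one kernel-verified Lean document; each statement's English description precedes it below -/
import Mathlib

section
/- Let n ≥ 20 be an integer. Then π_{(n,n)}((1,1)) ≤ e^{100}/n⁴, where e is Euler's number. (This is the quantitative content of the paper's Ω(n⁴) lower bound for the sandpile transience class of the n × n grid.) -/
/-- A grid walk of length `t` from `v ∈ ℤ²`: a function on `{0,…,t}` starting at `v`
whose consecutive values differ by exactly `1` in `ℓ¹`-norm. -/
def IsGridWalk (v : ℤ × ℤ) (t : ℕ) (w : Fin (t + 1) → ℤ × ℤ) : Prop :=
  w 0 = v ∧ ∀ j : Fin t,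
    |(w j.succ).1 - (w j.castSucc).1| + |(w j.succ).2 - (w j.castSucc).2| = 1

/-- Membership in the box `B = {1,…,n}²`. -/
def InBox (n : ℕ) (p : ℤ × ℤ) : Prop :=
  1 ≤ p.1 ∧ p.1 ≤ (n : ℤ) ∧ 1 ≤ p.2 ∧ p.2 ≤ (n : ℤ)

/-- `N_t(v, u)`: the number of grid walks of length `t` from `v` staying in `B \ {u}`
before time `t` and ending at `u` at time `t`. -/
noncomputable def gridHitCount (n : ℕ) (v u : ℤ × ℤ) (t : ℕ) : ℕ :=
  {w : Fin (t + 1) → ℤ × ℤ | IsGridWalk v t w ∧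
    (∀ j : Fin t, InBox n (w j.castSucc) ∧ w j.castSucc ≠ u) ∧
    w (Fin.last t) = u}.ncard

/-- The potential `π_u(v) = Σ_{t ≥ 0} N_t(v,u) / 4^t`. -/
noncomputable def gridPotential (n : ℕ) (u v : ℤ × ℤ) : ℝ :=
  ∑' t : ℕ, (gridHitCount n v u t : ℝ) / 4 ^ t

def hitSet (n : ℕ) (v u : ℤ × ℤ) (t : ℕ) : Set (Fin (t + 1) → ℤ × ℤ) :=
  {w : Fin (t + 1) → ℤ × ℤ | IsGridWalk v t w ∧
    (∀ j : Fin t, InBox n (w j.castSucc) ∧ w j.castSucc ≠ u) ∧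
    w (Fin.last t) = u}

lemma hitSet_succ (n : ℕ) (x y : ℤ) (u : ℤ × ℤ) (t : ℕ) :
    hitSet n (x, y) u (t + 1) ⊆
      ((Fin.cons (x, y) '' hitSet n (x + 1, y) u t ∪ Fin.cons (x, y) '' hitSet n (x - 1, y) u t) ∪
      (Fin.cons (x, y) '' hitSet n (x, y + 1) u t ∪ Fin.cons (x, y) '' hitSet n (x, y - 1) u t) :
        Set (Fin (t + 2) → ℤ × ℤ)) := by
  rintro w ⟨⟨h0, hs⟩, hb, hl⟩
  have key : ∀ v', w 1 = v' →
      w ∈ (Fin.cons (x, y) '' hitSet n v' u t : Set (Fin (t + 2) → ℤ × ℤ)) := by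
    intro v' hv'
    refine ⟨Fin.tail w, ⟨⟨?_, ?_⟩, ?_, ?_⟩, ?_⟩
    · simpa [Fin.tail] using hv'
    · intro j
      have := hs j.succ
      simpa [Fin.tail] using this
    · intro j
      have := hb j.succ
      simpa [Fin.tail] using this
    · simpa [Fin.tail] using hl
    · rw [← h0]; exact Fin.cons_self_tail w
  have h1 := hs 0
  simp only [Fin.succ_zero_eq_one, Fin.castSucc_zero, h0] at h1
  rcases hw : w 1 with ⟨a, b⟩
  rw [hw] at h1
  simp only at h1
  have hcase : (a = x + 1 ∧ b = y) ∨ (a = x - 1 ∧ b = y) ∨ (a = x ∧ b = y + 1) ∨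
      (a = x ∧ b = y - 1) := by
    rcases abs_cases (a - x) with h | h <;> rcases abs_cases (b - y) with h' | h' <;> omega
  have := key _ hw
  rcases hcase with ⟨rfl, rfl⟩ | ⟨rfl, rfl⟩ | ⟨rfl, rfl⟩ | ⟨rfl, rfl⟩
  · exact Or.inl (Or.inl this)
  · exact Or.inl (Or.inr this)
  · exact Or.inr (Or.inl this)
  · exact Or.inr (Or.inr this)

lemma hitSet_finite (n : ℕ) (u : ℤ × ℤ) (t : ℕ) : ∀ v, (hitSet n v u t).Finite := by
  induction t with
  | zero =>
    intro v
    refine (Set.finite_singleton (fun _ => v)).subset ?_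
    rintro w ⟨⟨h0, _⟩, _⟩
    ext1 j
    rw [show j = 0 from Fin.ext (by omega), h0]
  | succ t ih =>
    rintro ⟨x, y⟩
    exact ((((ih _).image _).union ((ih _).image _)).union
      (((ih _).image _).union ((ih _).image _))).subset (hitSet_succ n x y u t)

lemma count_succ (n : ℕ) (x y : ℤ) (u : ℤ × ℤ) (t : ℕ) :
    gridHitCount n (x, y) u (t + 1) ≤ gridHitCount n (x + 1, y) u t +
      gridHitCount n (x - 1, y) u t + gridHitCount n (x, y + 1) u t +
      gridHitCount n (x, y - 1) u t := by
  have hf := hitSet_finite n u t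
  have h := Set.ncard_le_ncard (hitSet_succ n x y u t)
    (((((hf _).image _).union ((hf _).image _)).union
      (((hf _).image _).union ((hf _).image _))))
  have i : ∀ v, (Fin.cons (x, y) '' hitSet n v u t : Set (Fin (t + 2) → ℤ × ℤ)).ncard
      ≤ gridHitCount n v u t := fun v => Set.ncard_image_le (hf v)
  have h2 := Set.ncard_union_le
    (Fin.cons (x, y) '' hitSet n (x + 1, y) u t ∪ Fin.cons (x, y) '' hitSet n (x - 1, y) u t :
      Set (Fin (t + 2) → ℤ × ℤ))
    (Fin.cons (x, y) '' hitSet n (x, y + 1) u t ∪ Fin.cons (x, y) '' hitSet n (x, y - 1) u t)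
  have h3 := Set.ncard_union_le
    (Fin.cons (x, y) '' hitSet n (x + 1, y) u t : Set (Fin (t + 2) → ℤ × ℤ))
    (Fin.cons (x, y) '' hitSet n (x - 1, y) u t)
  have h4 := Set.ncard_union_le
    (Fin.cons (x, y) '' hitSet n (x, y + 1) u t : Set (Fin (t + 2) → ℤ × ℤ))
    (Fin.cons (x, y) '' hitSet n (x, y - 1) u t)
  have i1 := i (x + 1, y)
  have i2 := i (x - 1, y)
  have i3 := i (x, y + 1)
  have i4 := i (x, y - 1)
  have h5 : gridHitCount n (x, y) u (t + 1) = (hitSet n (x, y) u (t + 1)).ncard := rfl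
  omega

lemma count_zero_ne (n : ℕ) (v u : ℤ × ℤ) (h : v ≠ u) : gridHitCount n v u 0 = 0 := by
  have : hitSet n v u 0 = ∅ := by
    ext w
    simp only [Set.mem_empty_iff_false, iff_false]
    rintro ⟨⟨h0, _⟩, _, hl⟩
    exact h (h0.symm.trans hl)
  change (hitSet n v u 0).ncard = 0
  simp [this]

lemma count_zero_le (n : ℕ) (v u : ℤ × ℤ) : gridHitCount n v u 0 ≤ 1 := by
  have : hitSet n v u 0 ⊆ {fun _ => v} := by
    rintro w ⟨⟨h0, _⟩, _⟩
    ext1 j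
    rw [show j = 0 from Fin.ext (by omega), h0]
  have h := Set.ncard_le_ncard this (Set.finite_singleton _)
  rw [Set.ncard_singleton] at h
  exact h

lemma count_succ_zero (n : ℕ) (v u : ℤ × ℤ) (t : ℕ) (h : ¬ InBox n v ∨ v = u) :
    gridHitCount n v u (t + 1) = 0 := by
  have : hitSet n v u (t + 1) = ∅ := by
    ext w
    simp only [Set.mem_empty_iff_false, iff_false]
    rintro ⟨⟨h0, _⟩, hb, _⟩
    have := hb 0
    simp only [Fin.castSucc_zero, h0] at this
    tauto
  change (hitSet n v u (t + 1)).ncard = 0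
  simp [this]

noncomputable def partialPot (n : ℕ) (u : ℤ × ℤ) (T : ℕ) (v : ℤ × ℤ) : ℝ :=
  ∑ t ∈ Finset.range T, (gridHitCount n v u t : ℝ) / 4 ^ t

lemma partial_out (n : ℕ) (u : ℤ × ℤ) (T : ℕ) (v : ℤ × ℤ) (h : ¬ InBox n v) (hu : v ≠ u) :
    partialPot n u T v = 0 := by
  unfold partialPot
  refine Finset.sum_eq_zero fun t _ => ?_
  cases t with
  | zero => simp [count_zero_ne n v u hu]
  | succ t => simp [count_succ_zero n v u t (Or.inl h)]

lemma partial_self (n : ℕ) (u : ℤ × ℤ) (T : ℕ) : partialPot n u T u ≤ 1 := by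
  unfold partialPot
  cases T with
  | zero => simp
  | succ T =>
    rw [Finset.sum_range_succ']
    have : (gridHitCount n u u 0 : ℝ) ≤ 1 := by exact_mod_cast count_zero_le n u u
    simpa [count_succ_zero n u u _ (Or.inr rfl)] using this

lemma partial_step (n : ℕ) (u : ℤ × ℤ) (T : ℕ) (x y : ℤ) (hu : (x, y) ≠ u) :
    partialPot n u (T + 1) (x, y) ≤ (partialPot n u T (x + 1, y) + partialPot n u T (x - 1, y) +
      partialPot n u T (x, y + 1) + partialPot n u T (x, y - 1)) / 4 := by
  unfold partialPot
  rw [Finset.sum_range_succ', count_zero_ne n _ u hu, ← Finset.sum_add_distrib,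
    ← Finset.sum_add_distrib, ← Finset.sum_add_distrib, Finset.sum_div]
  simp only [Nat.cast_zero, zero_div, add_zero]
  refine Finset.sum_le_sum fun t _ => ?_
  have h : (gridHitCount n (x, y) u (t + 1) : ℝ) ≤ gridHitCount n (x + 1, y) u t +
      gridHitCount n (x - 1, y) u t + gridHitCount n (x, y + 1) u t +
      gridHitCount n (x, y - 1) u t := by exact_mod_cast count_succ n x y u t
  rw [← add_div, ← add_div, ← add_div, div_div, pow_succ]
  gcongr

/-- Maximum principle on a domain `D`. -/
lemma max_principle (n : ℕ) (u : ℤ × ℤ) (D : ℤ → ℤ → Prop) (h : ℤ → ℤ → ℝ)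
    (hpos : ∀ x y, D x y → 0 ≤ h x y)
    (hu : ∀ x y, D x y → (x, y) = u → 1 ≤ h x y)
    (hsup : ∀ x y, D x y → (x, y) ≠ u →
      h (x + 1) y + h (x - 1) y + h x (y + 1) + h x (y - 1) ≤ 4 * h x y)
    (hbd : ∀ x y, D x y → ∀ a b : ℤ, |a - x| + |b - y| = 1 → ¬ D a b →
      ∀ T, partialPot n u T (a, b) ≤ h a b) :
    ∀ T x y, D x y → partialPot n u T (x, y) ≤ h x y := by
  intro T
  induction T with
  | zero => intro x y hD; simpa [partialPot] using hpos x y hD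
  | succ T ih =>
    intro x y hD
    by_cases hxy : (x, y) = u
    · have := partial_self n u (T + 1)
      rw [← hxy] at this ⊢
      exact this.trans (hu x y hD hxy)
    · have key : ∀ a b : ℤ, |a - x| + |b - y| = 1 → partialPot n u T (a, b) ≤ h a b := by
        intro a b hab
        by_cases hd : D a b
        · exact ih a b hd
        · exact hbd x y hD a b hab hd T
      have k1 := key (x + 1) y (by simp)
      have k2 := key (x - 1) y (by simp)
      have k3 := key x (y + 1) (by simp)
      have k4 := key x (y - 1) (by simp)
      have := partial_step n u T x y hxy
      have := hsup x y hD hxy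
      linarith

/-- one-variable estimate -/
lemma aux_u (e u : ℝ) (he : 0 ≤ e) (hu : 0 ≤ u) (hu8 : u ≤ 1 / 8) (he4 : e ≤ 1 / 8) :
    (1 - 4 * e + u) / (1 - u) ^ 2 ≤ 1 - 4 * e + 3 * u + 7 * u ^ 2 := by
  have h1 : 0 < (1 - u) ^ 2 := by
    have : 0 < 1 - u := by linarith
    positivity
  have h2 : 1 ≤ (1 + 2 * u + 4 * u ^ 2) * (1 - u) ^ 2 := by
    have : (1 + 2 * u + 4 * u ^ 2) * (1 - u) ^ 2 - 1 = u ^ 2 * (1 - 6 * u + 4 * u ^ 2) := by ring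
    have h3 : 0 ≤ u ^ 2 * (1 - 6 * u + 4 * u ^ 2) :=
      mul_nonneg (sq_nonneg u) (by nlinarith)
    linarith
  have h3 : 0 ≤ 1 - 4 * e + u := by linarith
  have h4 : (1 - 4 * e + u) * (1 + 2 * u + 4 * u ^ 2) ≤ 1 - 4 * e + 3 * u + 7 * u ^ 2 := by
    have a1 : 0 ≤ u ^ 2 * (1 - 4 * u) := mul_nonneg (sq_nonneg u) (by linarith)
    have a2 : 0 ≤ e * u := mul_nonneg he hu
    have a3 : 0 ≤ e * u ^ 2 := mul_nonneg he (sq_nonneg u)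
    nlinarith
  rw [div_le_iff₀ h1]
  calc 1 - 4 * e + u ≤ (1 - 4 * e + u) * ((1 + 2 * u + 4 * u ^ 2) * (1 - u) ^ 2) :=
        le_mul_of_one_le_right h3 h2
    _ = ((1 - 4 * e + u) * (1 + 2 * u + 4 * u ^ 2)) * (1 - u) ^ 2 := by ring
    _ ≤ _ := mul_le_mul_of_nonneg_right h4 h1.le

noncomputable def ff (x y : ℝ) : ℝ := x * y / (x ^ 2 + y ^ 2 + 100) ^ 2

lemma ff_pair (x y : ℝ) (e u S : ℝ) (hS : S = x ^ 2 + y ^ 2 + 101) (he : e = 1 / S)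
    (hu : u = 4 * x ^ 2 / S ^ 2) (hu1 : u ≤ 1 / 8) :
    ff (x + 1) y + ff (x - 1) y = 2 * x * y / S ^ 2 * ((1 - 4 * e + u) / (1 - u) ^ 2) := by
  have hSp : 0 < S := by rw [hS]; positivity
  have e1 : (x + 1) ^ 2 + y ^ 2 + 100 = S + 2 * x := by rw [hS]; ring
  have e2 : (x - 1) ^ 2 + y ^ 2 + 100 = S - 2 * x := by rw [hS]; ring
  have p1 : 0 < S + 2 * x := by rw [← e1]; positivity
  have p2 : 0 < S - 2 * x := by rw [← e2]; positivity
  have h1 : 1 - u = (S + 2 * x) * (S - 2 * x) / S ^ 2 := by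
    rw [hu]; field_simp; ring
  have h2 : 1 - 4 * e + u = (S ^ 2 - 4 * S + 4 * x ^ 2) / S ^ 2 := by
    rw [hu, he]; field_simp
  have n1 := p1.ne'
  have n2 := p2.ne'
  have n3 := hSp.ne'
  rw [h1, h2, ff, ff, e1, e2]
  generalize hA : S + 2 * x = A at *
  generalize hBB : S - 2 * x = B at *
  rw [div_pow, div_div_div_eq, div_add_div _ _ (by positivity) (by positivity),
    div_mul_div_comm, div_eq_div_iff (by positivity) (by positivity), ← hA, ← hBB]
  ring

lemma ff_comm (x y : ℝ) : ff x y = ff y x := by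
  unfold ff; rw [mul_comm x y, add_comm (x ^ 2)]

lemma ff_super (x y : ℝ) (hx : 0 ≤ x) (hy : 0 ≤ y) :
    ff (x + 1) y + ff (x - 1) y + ff x (y + 1) + ff x (y - 1) ≤ 4 * ff x y := by
  obtain ⟨S, hS⟩ : ∃ S, S = x ^ 2 + y ^ 2 + 101 := ⟨_, rfl⟩
  obtain ⟨e, he⟩ : ∃ e, e = 1 / S := ⟨_, rfl⟩
  obtain ⟨u, hu⟩ : ∃ u, u = 4 * x ^ 2 / S ^ 2 := ⟨_, rfl⟩
  obtain ⟨v, hv⟩ : ∃ v, v = 4 * y ^ 2 / S ^ 2 := ⟨_, rfl⟩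
  have hS1 : 101 ≤ S := by rw [hS]; nlinarith [sq_nonneg x, sq_nonneg y]
  have hSp : 0 < S := by linarith
  have hep : 0 < e := by rw [he]; positivity
  have he8 : e ≤ 1 / 101 := by rw [he]; exact one_div_le_one_div_of_le (by norm_num) hS1
  have hup : 0 ≤ u := by rw [hu]; positivity
  have hvp : 0 ≤ v := by rw [hv]; positivity
  have huv : u + v = 4 * e - 404 * e ^ 2 := by
    rw [hu, hv, he]; field_simp; rw [hS]; ring
  have hu8 : u ≤ 1 / 8 := by nlinarith
  have hv8 : v ≤ 1 / 8 := by nlinarith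
  have P1 := ff_pair x y e u S hS he hu hu8
  have P2 := ff_pair y x e v S (by rw [hS]; ring) he hv hv8
  have A1 := aux_u e u hep.le hup hu8 (by linarith)
  have A2 := aux_u e v hep.le hvp hv8 (by linarith)
  have B : (1 - 4 * e + u) / (1 - u) ^ 2 + (1 - 4 * e + v) / (1 - v) ^ 2 ≤ 2 + 4 * e := by
    have : u ^ 2 + v ^ 2 ≤ 16 * e ^ 2 := by
      have h1 : (u + v) ^ 2 ≤ (4 * e) ^ 2 := by
        apply pow_le_pow_left₀ (by linarith)
        nlinarith
      nlinarith [mul_nonneg hup hvp]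
    nlinarith
  have R : ff x y = x * y / S ^ 2 * (1 / (1 - e) ^ 2) := by
    have q : x ^ 2 + y ^ 2 + 100 = S - 1 := by rw [hS]; ring
    have q2 : 1 - e = (S - 1) / S := by rw [he]; field_simp
    have q3 : 0 < S - 1 := by linarith
    rw [ff, q, q2]
    field_simp
  have C : 2 + 4 * e ≤ 2 * (1 / (1 - e) ^ 2) := by
    have : 0 < (1 - e) ^ 2 := by
      have : 0 < 1 - e := by linarith
      positivity
    rw [mul_one_div, le_div_iff₀ this]
    nlinarith [mul_nonneg hep.le (sq_nonneg e), sq_nonneg e]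
  rw [ff_comm x (y + 1), ff_comm x (y - 1)]
  have K : 0 ≤ 2 * x * y / S ^ 2 := by positivity
  have L := mul_le_mul_of_nonneg_left (B.trans C) K
  calc _ = (ff (x + 1) y + ff (x - 1) y) + (ff (y + 1) x + ff (y - 1) x) := by ring
    _ = 2 * x * y / S ^ 2 * ((1 - 4 * e + u) / (1 - u) ^ 2 + (1 - 4 * e + v) / (1 - v) ^ 2) := by
      rw [P1, P2]; ring
    _ ≤ _ := L
    _ = _ := by rw [R]; ring

lemma ff_nonneg (x y : ℝ) (hx : 0 ≤ x) (hy : 0 ≤ y) : 0 ≤ ff x y := by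
  unfold ff; positivity

lemma ff_le (x y r : ℝ) (hr : 0 < r) (h : r ^ 2 ≤ x ^ 2 + y ^ 2) : ff x y ≤ 1 / (2 * r ^ 2) := by
  unfold ff
  have hp : 0 < x ^ 2 + y ^ 2 + 100 := by positivity
  have hr2 : 0 < r ^ 2 := by positivity
  rw [div_le_div_iff₀ (by positivity) (by positivity)]
  have h1 : 2 * (x * y) ≤ x ^ 2 + y ^ 2 + 100 := by nlinarith [sq_nonneg (x - y)]
  calc x * y * (2 * r ^ 2) = 2 * (x * y) * r ^ 2 := by ring
    _ ≤ (x ^ 2 + y ^ 2 + 100) * r ^ 2 := mul_le_mul_of_nonneg_right h1 hr2.le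
    _ ≤ (x ^ 2 + y ^ 2 + 100) * (x ^ 2 + y ^ 2 + 100) :=
        mul_le_mul_of_nonneg_left (by linarith) hp.le
    _ = _ := by ring

lemma step1 (n : ℕ) : ∀ T (x y : ℤ), InBox n (x, y) →
    partialPot n ((n : ℤ), (n : ℤ)) T (x, y) ≤ 10404 * ff (n + 1 - x) (n + 1 - y) := by
  refine max_principle n _ (fun x y => InBox n (x, y))
    (fun x y => 10404 * ff (n + 1 - x) (n + 1 - y)) ?_ ?_ ?_ ?_
  · rintro x y ⟨h1, h2, h3, h4⟩
    simp only at h1 h2 h3 h4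
    have h2' : (x : ℝ) ≤ n := by exact_mod_cast h2
    have h4' : (y : ℝ) ≤ n := by exact_mod_cast h4
    exact mul_nonneg (by norm_num) (ff_nonneg _ _ (by linarith) (by linarith))
  · intro x y _ hxy
    obtain ⟨rfl, rfl⟩ := Prod.mk.inj hxy
    norm_num [ff]
  · rintro x y ⟨h1, h2, h3, h4⟩ _
    simp only at h1 h2 h3 h4
    have h2' : (x : ℝ) ≤ n := by exact_mod_cast h2
    have h4' : (y : ℝ) ≤ n := by exact_mod_cast h4
    have := ff_super (n + 1 - x) (n + 1 - y) (by linarith) (by linarith)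
    push_cast
    rw [show (n : ℝ) + 1 - (x + 1) = n + 1 - x - 1 by ring,
      show (n : ℝ) + 1 - (x - 1) = n + 1 - x + 1 by ring,
      show (n : ℝ) + 1 - (y + 1) = n + 1 - y - 1 by ring,
      show (n : ℝ) + 1 - (y - 1) = n + 1 - y + 1 by ring]
    linarith
  · rintro x y ⟨h1, h2, h3, h4⟩ a b hab hD T
    simp only at h1 h2 h3 h4
    have hn : 1 ≤ (n : ℤ) := h1.trans h2
    rw [partial_out n _ T _ hD]
    · have ha : a ≤ n + 1 := by
        have := le_abs_self (a - x); have := abs_nonneg (b - y); omega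
      have hb : b ≤ n + 1 := by
        have := le_abs_self (b - y); have := abs_nonneg (a - x); omega
      have ha' : (a : ℝ) ≤ n + 1 := by exact_mod_cast ha
      have hb' : (b : ℝ) ≤ n + 1 := by exact_mod_cast hb
      exact mul_nonneg (by norm_num) (ff_nonneg _ _ (by linarith) (by linarith))
    · intro h
      rw [h] at hD
      exact hD ⟨hn, le_rfl, hn, le_rfl⟩

noncomputable def pp (M x y : ℝ) : ℝ :=
  x ^ 4 - x ^ 2 + (y ^ 4 - y ^ 2) - 6 * x ^ 2 * y ^ 2 + 6 * M ^ 2 * x * y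

lemma int_quart (x : ℤ) : (0 : ℝ) ≤ (x : ℝ) ^ 4 - (x : ℝ) ^ 2 := by
  have : 0 ≤ x ^ 4 - x ^ 2 := by
    rcases eq_or_ne x 0 with rfl | h
    · simp
    · have : 0 < x ^ 2 := by positivity
      nlinarith
  exact_mod_cast this

lemma pp_nonneg (M : ℝ) (x y : ℤ) (hx : 0 ≤ x) (hy : 0 ≤ y) (hxM : (x : ℝ) ≤ M)
    (hyM : (y : ℝ) ≤ M) : (x : ℝ) ^ 4 - (x : ℝ) ^ 2 + ((y : ℝ) ^ 4 - (y : ℝ) ^ 2) ≤ pp M x y := by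
  have hx' : (0 : ℝ) ≤ x := by exact_mod_cast hx
  have hy' : (0 : ℝ) ≤ y := by exact_mod_cast hy
  have h1 : (x : ℝ) * y ≤ M * M := mul_le_mul hxM hyM hy' (by linarith)
  have h2 := mul_le_mul_of_nonneg_left h1 (mul_nonneg hx' hy')
  unfold pp
  nlinarith

lemma step2 (n m : ℕ) (hm1 : 1 ≤ m) (hmn : m < n) (c : ℝ) (hc : 0 ≤ c)
    (hbd : ∀ T (x y : ℤ), InBox n (x, y) → (x = m + 1 ∨ y = m + 1) →
      partialPot n ((n : ℤ), (n : ℤ)) T (x, y) ≤ c) :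
    ∀ T (x y : ℤ), InBox m (x, y) → partialPot n ((n : ℤ), (n : ℤ)) T (x, y) ≤
      c / (((m : ℝ) + 1) ^ 4 - ((m : ℝ) + 1) ^ 2) * pp (m + 1) x y := by
  have hM : (0 : ℝ) < ((m : ℝ) + 1) ^ 4 - ((m : ℝ) + 1) ^ 2 := by
    have : (1 : ℝ) ≤ m := by exact_mod_cast hm1
    have : (1 : ℝ) < ((m : ℝ) + 1) ^ 2 := by nlinarith
    nlinarith
  have hcM : 0 ≤ c / (((m : ℝ) + 1) ^ 4 - ((m : ℝ) + 1) ^ 2) := div_nonneg hc hM.le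
  refine max_principle n _ (fun x y => InBox m (x, y))
    (fun x y => c / (((m : ℝ) + 1) ^ 4 - ((m : ℝ) + 1) ^ 2) * pp (m + 1) x y) ?_ ?_ ?_ ?_
  · rintro x y ⟨h1, h2, h3, h4⟩
    simp only at h1 h2 h3 h4
    have h2' : (x : ℝ) ≤ m := by exact_mod_cast h2
    have h4' : (y : ℝ) ≤ m := by exact_mod_cast h4
    have := pp_nonneg (m + 1) x y (by omega) (by omega) (by linarith) (by linarith)
    exact mul_nonneg hcM (by linarith [int_quart x, int_quart y])
  · rintro x y ⟨h1, h2, h3, h4⟩ hxy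
    obtain ⟨rfl, rfl⟩ := Prod.mk.inj hxy
    simp only at h2
    omega
  · intro x y _ _
    apply le_of_eq
    push_cast
    unfold pp
    ring
  · rintro x y ⟨h1, h2, h3, h4⟩ a b hab hD T
    simp only at h1 h2 h3 h4
    have hA : 0 ≤ a ∧ a ≤ m + 1 ∧ 0 ≤ b ∧ b ≤ m + 1 := by
      rcases abs_cases (a - x) with h | h <;> rcases abs_cases (b - y) with h' | h' <;> omega
    obtain ⟨a1, a2, b1, b2⟩ := hA
    have a2' : (a : ℝ) ≤ m + 1 := by exact_mod_cast a2
    have b2' : (b : ℝ) ≤ m + 1 := by exact_mod_cast b2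
    have hp := pp_nonneg (m + 1) a b a1 b1 a2' b2'
    have qa := int_quart a
    have qb := int_quart b
    by_cases hB : InBox n (a, b)
    · have hor : a = m + 1 ∨ b = m + 1 := by
        by_contra hcon
        push Not at hcon
        apply hD
        obtain ⟨g1, g2, g3, g4⟩ := hB
        simp only at g1 g2 g3 g4
        refine ⟨g1, ?_, g3, ?_⟩ <;> simp only <;> omega
      refine (hbd T a b hB hor).trans ?_
      rw [div_mul_eq_mul_div, le_div_iff₀ hM]
      apply mul_le_mul_of_nonneg_left _ hc
      rcases hor with rfl | rfl <;> push_cast at * <;> linarith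
    · rw [partial_out n _ T _ hB]
      · exact mul_nonneg hcM (by linarith)
      · intro h
        rw [h] at hB
        exact hB ⟨by simp only; omega, le_rfl, by simp only; omega, le_rfl⟩

/-- For every integer `n ≥ 20`, `π_{(n,n)}((1,1)) ≤ e^100 / n^4`. -/
theorem sandpile_grid_lower_bound_potential (n : ℕ) (hn : 20 ≤ n) :
    gridPotential n ((n : ℤ), (n : ℤ)) (1, 1) ≤ Real.exp 100 / (n : ℝ) ^ 4 := by
  obtain ⟨m, hm⟩ : ∃ m, m = n / 2 := ⟨_, rfl⟩
  have hm1 : 1 ≤ m := by omega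
  have hmn : m < n := by omega
  have hmr : (n : ℝ) / 2 ≤ m + 1 := by
    have : (n : ℝ) ≤ 2 * (m + 1) := by exact_mod_cast (by omega : n ≤ 2 * (m + 1))
    linarith
  have hmr2 : (m : ℝ) ≤ n / 2 := by
    have : 2 * (m : ℝ) ≤ n := by exact_mod_cast (by omega : 2 * m ≤ n)
    linarith
  have hn0 : (20 : ℝ) ≤ n := by exact_mod_cast hn
  have hnp : (0 : ℝ) < n := by linarith
  have hbd : ∀ T (x y : ℤ), InBox n (x, y) → (x = m + 1 ∨ y = m + 1) →
      partialPot n ((n : ℤ), (n : ℤ)) T (x, y) ≤ 20808 / (n : ℝ) ^ 2 := by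
    intro T x y hB hor
    refine (step1 n T x y hB).trans ?_
    have := ff_le (n + 1 - x) (n + 1 - y) (n / 2) (by positivity) (by
      rcases hor with rfl | rfl
      · push_cast
        nlinarith [sq_nonneg ((n : ℝ) + 1 - y)]
      · push_cast
        nlinarith [sq_nonneg ((n : ℝ) + 1 - x)])
    calc _ ≤ 10404 * (1 / (2 * ((n : ℝ) / 2) ^ 2)) := by linarith
      _ = _ := by field_simp; norm_num
  have h2 := step2 n m hm1 hmn (20808 / (n : ℝ) ^ 2) (by positivity) hbd
  have hexp : (499392 : ℝ) ≤ Real.exp 100 := by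
    have h := Real.add_one_le_exp (1 : ℝ)
    have : Real.exp 100 = Real.exp 1 ^ 100 := by rw [← Real.exp_nat_mul]; norm_num
    rw [this]
    calc (499392 : ℝ) ≤ 2 ^ 100 := by norm_num
      _ ≤ _ := pow_le_pow_left₀ (by norm_num) (by linarith) _
  unfold gridPotential
  refine Real.tsum_le_of_sum_range_le (fun t => by positivity) fun T => ?_
  have h3 := h2 T 1 1 ⟨le_rfl, by simp only; omega, le_rfl, by simp only; omega⟩
  refine h3.trans ?_
  obtain ⟨M, hM⟩ : ∃ M : ℝ, M = m + 1 := ⟨_, rfl⟩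
  rw [← hM] at hmr ⊢
  have hM1 : 1 < M := by linarith
  have hMM : 0 < M ^ 2 - 1 := by nlinarith
  have hMp : 0 < M := by linarith
  have e1 : 20808 / (n : ℝ) ^ 2 / (M ^ 4 - M ^ 2) * pp M (1 : ℤ) (1 : ℤ) =
      124848 / (n : ℝ) ^ 2 / M ^ 2 := by
    have : M ^ 4 - M ^ 2 = M ^ 2 * (M ^ 2 - 1) := by ring
    rw [this]
    unfold pp
    push_cast
    field_simp
    ring
  rw [e1]
  calc 124848 / (n : ℝ) ^ 2 / M ^ 2 ≤ 124848 / (n : ℝ) ^ 2 / ((n : ℝ) / 2) ^ 2 := by gcongr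
    _ = 499392 / (n : ℝ) ^ 4 := by field_simp; norm_num
    _ ≤ _ := by gcongr
end

section
/- Let n ≥ 20 and t ≥ n − 1 be integers. Then Pr_1^t[w(t) = n, MAX(w) = n, and MIN(w) ≥ 1] ≤ min{ e^{25}/n³, 64·(n/t)³ }, where e is Euler's number. -/
/-- A 1D walk of length `t` started at `i`: a function on `{0,…,t}` starting at `i`
whose consecutive values differ by exactly `1`. -/
def IsWalk (i : ℤ) (t : ℕ) (w : Fin (t + 1) → ℤ) : Prop :=
  w 0 = i ∧ ∀ j : Fin t, |w j.succ - w j.castSucc| = 1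

/-- The number of walks of length `t` started at `i` satisfying `P`. -/
noncomputable def walkCount (i : ℤ) (t : ℕ) (P : (Fin (t + 1) → ℤ) → Prop) : ℕ :=
  {w : Fin (t + 1) → ℤ | IsWalk i t w ∧ P w}.ncard

/-- `Pr_i^t[P]`: the number of walks of length `t` started at `i` satisfying `P`,
divided by `2 ^ t`. -/
noncomputable def walkProb (i : ℤ) (t : ℕ) (P : (Fin (t + 1) → ℤ) → Prop) : ℝ :=
  (walkCount i t P : ℝ) / 2 ^ t

/-- `w(t) = n`. -/
def endsAt {t : ℕ} (n : ℤ) (w : Fin (t + 1) → ℤ) : Prop := w (Fin.last t) = n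

/-- `MAX(w) = n`. -/
def maxEq {t : ℕ} (n : ℤ) (w : Fin (t + 1) → ℤ) : Prop :=
  (∀ j, w j ≤ n) ∧ ∃ j, w j = n

/-- `MIN(w) ≥ m`. -/
def minGE {t : ℕ} (m : ℤ) (w : Fin (t + 1) → ℤ) : Prop := ∀ j, m ≤ w j

/-- number of walks from 1 to i confined to [1,n] -/
def cw (n : ℕ) : ℕ → ℕ → ℕ
  | 0, i => if i = 1 then 1 else 0
  | _ + 1, 0 => 0
  | t + 1, i + 1 => if i + 1 ≤ n then cw n t i + cw n t (i + 2) else 0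

theorem cw_zero (n t : ℕ) : cw n t 0 = 0 := by cases t <;> simp [cw]

theorem cw_top (n t : ℕ) (hn : 1 ≤ n) : cw n t (n + 1) = 0 := by
  cases t
  · simp [cw]; omega
  · simp [cw]

/-- the confined walks ending at m -/
def cset (n t : ℕ) (m : ℤ) : Set (Fin (t + 1) → ℤ) :=
  {w | IsWalk 1 t w ∧ w (Fin.last t) = m ∧ ∀ j, 1 ≤ w j ∧ w j ≤ n}

theorem cset_step (n t : ℕ) (m : ℤ) :
    (cset n (t + 1) m).encard ≤ (cset n t (m - 1)).encard + (cset n t (m + 1)).encard := by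
  have hinj : Set.InjOn (fun w : Fin (t + 1 + 1) → ℤ => (Fin.init w : Fin (t + 1) → ℤ))
      (cset n (t + 1) m) := by
    intro w hw v hv h
    have h1 : w = Fin.snoc (Fin.init w : Fin (t + 1) → ℤ) (w (Fin.last _)) :=
      (Fin.snoc_init_self w).symm
    have h2 : v = Fin.snoc (Fin.init v : Fin (t + 1) → ℤ) (v (Fin.last _)) :=
      (Fin.snoc_init_self v).symm
    have h' : (Fin.init w : Fin (t + 1) → ℤ) = Fin.init v := h
    rw [h1, h2, hw.2.1, hv.2.1, h']
  rw [← hinj.encard_image]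
  refine le_trans (Set.encard_le_encard ?_) (Set.encard_union_le _ _)
  rintro _ ⟨w, ⟨⟨h0, hs⟩, hl, hb⟩, rfl⟩
  have hw : IsWalk 1 t (Fin.init w : Fin (t + 1) → ℤ) := by
    refine ⟨h0, fun j => ?_⟩
    have := hs j.castSucc
    rw [Fin.succ_castSucc] at this
    exact this
  have hb' : ∀ j, 1 ≤ (Fin.init w : Fin (t + 1) → ℤ) j ∧ (Fin.init w : Fin (t + 1) → ℤ) j ≤ n :=
    fun j => hb _
  have h3 := hs (Fin.last t)
  rw [Fin.succ_last, hl] at h3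
  rcases (abs_eq (by norm_num : (0 : ℤ) ≤ 1)).1 h3 with h | h
  · left
    exact ⟨hw, by simp only [Fin.init]; linarith, hb'⟩
  · right
    exact ⟨hw, by simp only [Fin.init]; linarith, hb'⟩

theorem cset_le (n : ℕ) (t : ℕ) : ∀ i : ℕ, (cset n t (i : ℤ)).encard ≤ (cw n t i : ℕ∞) := by
  induction t with
  | zero =>
    intro i
    by_cases hi : i = 1
    · subst hi
      simp only [cw, if_true]
      show (cset n 0 ((1 : ℕ) : ℤ)).encard ≤ ((1 : ℕ) : ℕ∞)
      rw [show ((1 : ℕ) : ℕ∞) = 1 from rfl, Set.encard_le_one_iff]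
      intro a b ha hb
      funext j
      have : j = 0 := Fin.ext (by have := j.isLt; simp)
      rw [this, ha.1.1, hb.1.1]
    · have : cset n 0 (i : ℤ) = ∅ := by
        ext w
        simp only [Set.mem_empty_iff_false, iff_false]
        rintro ⟨⟨h0, -⟩, hl, -⟩
        have : w 0 = i := hl
        rw [h0] at this
        apply hi
        exact_mod_cast this.symm
      simp [this]
  | succ t ih =>
    intro i
    rcases i with _ | i
    · have : cset n (t + 1) ((0 : ℕ) : ℤ) = ∅ := by
        ext w
        simp only [Set.mem_empty_iff_false, iff_false]
        rintro ⟨-, hl, hb⟩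
        have := (hb (Fin.last _)).1
        rw [hl] at this
        simp at this
      rw [this, Set.encard_empty]; exact zero_le
    · by_cases hi : i + 1 ≤ n
      · refine (cset_step n t _).trans ?_
        simp only [cw, if_pos hi]
        have h1 := ih i
        have h2 := ih (i + 2)
        have e1 : ((i + 1 : ℕ) : ℤ) - 1 = (i : ℤ) := by push_cast; ring
        have e2 : ((i + 1 : ℕ) : ℤ) + 1 = ((i + 2 : ℕ) : ℤ) := by push_cast; ring
        rw [e1, e2, Nat.cast_add]
        exact add_le_add h1 h2
      · have : cset n (t + 1) ((i + 1 : ℕ) : ℤ) = ∅ := by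
          ext w
          simp only [Set.mem_empty_iff_false, iff_false]
          rintro ⟨-, hl, hb⟩
          have := (hb (Fin.last _)).2
          rw [hl] at this
          omega
        rw [this, Set.encard_empty]; exact zero_le

theorem walkProb_le_cw (n t : ℕ) :
    walkProb 1 t (fun w => endsAt (n : ℤ) w ∧ maxEq (n : ℤ) w ∧ minGE 1 w) ≤
      (cw n t n : ℝ) / 2 ^ t := by
  unfold walkProb walkCount
  have h1 := cset_le n t n
  have hfin : (cset n t (n : ℤ)).Finite :=
    Set.finite_of_encard_le_coe h1
  have h2 : (cset n t (n : ℤ)).ncard ≤ cw n t n := by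
    rw [← hfin.cast_ncard_eq] at h1
    exact_mod_cast h1
  have h3 : {w : Fin (t + 1) → ℤ | IsWalk 1 t w ∧
      (endsAt (n : ℤ) w ∧ maxEq (n : ℤ) w ∧ minGE 1 w)} ⊆ cset n t (n : ℤ) := by
    rintro w ⟨hw, he, hm, hg⟩
    exact ⟨hw, he, fun j => ⟨hg j, hm.1 j⟩⟩
  have h4 := (Set.ncard_le_ncard h3 hfin).trans h2
  gcongr

theorem sin_rec (β : ℝ) (i : ℕ) :
    Real.sin ((i : ℕ) * β) + Real.sin ((i + 2 : ℕ) * β) =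
      2 * Real.cos β * Real.sin ((i + 1 : ℕ) * β) := by
  have e1 : ((i : ℕ) : ℝ) * β = ((i + 1 : ℕ) : ℝ) * β - β := by push_cast; ring
  have e2 : ((i + 2 : ℕ) : ℝ) * β = ((i + 1 : ℕ) : ℝ) * β + β := by push_cast; ring
  rw [e1, e2, Real.sin_sub, Real.sin_add]; ring

/-- the confined counts divided by the ground state are decreasing -/
theorem cw_mono (n : ℕ) (hn : 1 ≤ n) (s : ℕ → ℝ) (l : ℝ) (hs0 : s 0 = 0) (hsn : s (n + 1) = 0)
    (hpos : ∀ i, 1 ≤ i → i ≤ n → 0 < s i)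
    (hrec : ∀ i, s i + s (i + 2) = l * s (i + 1)) (t : ℕ) :
    ∀ i, i + 2 ≤ n + 1 → (cw n t (i + 2) : ℝ) * s i ≤ cw n t i * s (i + 2) := by
  have hnn : ∀ i, i ≤ n + 1 → 0 ≤ s i := by
    intro i hi
    rcases Nat.eq_zero_or_pos i with h | h
    · rw [h, hs0]
    · rcases Nat.lt_or_ge n i with h' | h'
      · have : i = n + 1 := by omega
        rw [this, hsn]
      · exact (hpos i h h').le
  induction t with
  | zero =>
    intro i hi
    have : cw n 0 (i + 2) = 0 := by simp [cw]
    rw [this]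
    simp only [Nat.cast_zero, zero_mul]
    exact mul_nonneg (Nat.cast_nonneg _) (hnn _ hi)
  | succ t ih =>
    intro i hi
    rcases i with _ | i
    · rw [hs0, cw_zero]; simp
    · rcases Nat.lt_or_ge n (i + 1 + 2) with h' | h'
      · have : i + 1 + 2 = n + 1 := by omega
        rw [this, hsn, cw_top n _ hn]; simp
      · have e1 : cw n (t + 1) (i + 1 + 2) = cw n t (i + 2) + cw n t (i + 2 + 2) := by
          show (if i + 2 + 1 ≤ n then cw n t (i + 2) + cw n t (i + 2 + 2) else 0) = _
          rw [if_pos h']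
        have e2 : cw n (t + 1) (i + 1) = cw n t i + cw n t (i + 2) := by
          show (if i + 1 ≤ n then cw n t i + cw n t (i + 2) else 0) = _
          rw [if_pos (by omega)]
        rw [e1, e2]
        push_cast
        have i1 := ih i (by omega)
        have i2 := ih (i + 2) (by omega)
        have r1 := hrec i
        have r2 := hrec (i + 2)
        have p2 := hpos (i + 2) (by omega) (by omega)
        have p1 := hpos (i + 1) (by omega) (by omega)
        have p3 := hpos (i + 1 + 2) (by omega) (by omega)
        have e3 : i + 2 + 1 = i + 1 + 2 := rfl
        rw [e3] at r2
        set a : ℝ := (cw n t i : ℝ)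
        set b : ℝ := (cw n t (i + 2) : ℝ)
        set c : ℝ := (cw n t (i + 2 + 2) : ℝ)
        have k1 : (b + c) * s (i + 2) ≤ b * (l * s (i + 1 + 2)) := by
          rw [← r2]; linarith
        have k2 : b * (l * s (i + 1)) ≤ (a + b) * s (i + 2) := by
          rw [← r1]; linarith
        have k3 : ((b + c) * s (i + 1)) * s (i + 2) ≤ ((a + b) * s (i + 1 + 2)) * s (i + 2) := by
          have := mul_le_mul_of_nonneg_right k1 p1.le
          have := mul_le_mul_of_nonneg_right k2 p3.le
          linarith
        exact le_of_mul_le_mul_right k3 p2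

theorem cw_growth (n : ℕ) (hn : 3 ≤ n) (s : ℕ → ℝ) (l : ℝ) (hs0 : s 0 = 0) (hsn : s (n + 1) = 0)
    (hpos : ∀ i, 1 ≤ i → i ≤ n → 0 < s i)
    (hrec : ∀ i, s i + s (i + 2) = l * s (i + 1)) (t : ℕ) :
    l ^ 2 * (cw n t n : ℝ) ≤ cw n (t + 2) n := by
  obtain ⟨k, rfl⟩ : ∃ k, n = k + 3 := ⟨n - 3, by omega⟩
  set n := k + 3 with hk
  have m := cw_mono n (by omega) s l hs0 hsn hpos hrec t (k + 1) (by omega)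
  have e1 : cw n (t + 2) n = cw n (t + 1) (k + 2) + cw n (t + 1) (n + 1) := by
    show (if k + 2 + 1 ≤ n then cw n (t + 1) (k + 2) + cw n (t + 1) (k + 2 + 2) else 0) = _
    rw [if_pos (by omega)]
  have e2 : cw n (t + 1) (k + 2) = cw n t (k + 1) + cw n t n := by
    show (if k + 1 + 1 ≤ n then cw n t (k + 1) + cw n t (k + 1 + 2) else 0) = _
    rw [if_pos (by omega)]
  rw [cw_top n _ (by omega)] at e1
  rw [e1, e2]
  push_cast
  have r1 := hrec (k + 1)
  have r2 := hrec (k + 2)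
  have e3 : k + 2 + 2 = n + 1 := rfl
  have e4 : k + 2 + 1 = n := rfl
  have e5 : k + 1 + 2 = n := rfl
  have e6 : k + 1 + 1 = k + 2 := rfl
  rw [e3, e4, hsn] at r2
  rw [e5, e6] at r1
  rw [e5] at m
  have pn := hpos n (by omega) le_rfl
  set a : ℝ := (cw n t (k + 1) : ℝ)
  set b : ℝ := (cw n t n : ℝ)
  have : (l ^ 2 * b) * s n ≤ (a + b + 0) * s n := by
    have : l ^ 2 * s n = s (k + 1) + s n := by
      rw [r1, sq, mul_assoc, ← r2]; ring
    calc (l ^ 2 * b) * s n = b * (l ^ 2 * s n) := by ring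
      _ = b * s (k + 1) + b * s n := by rw [this]; ring
      _ ≤ _ := by linarith
  simpa using le_of_mul_le_mul_right this pn

theorem sum_parts (f s : ℕ → ℝ) (N : ℕ) :
    ∑ j ∈ Finset.range N, (f j + f (j + 2)) * s (j + 1) =
      ∑ j ∈ Finset.range N, f (j + 1) * (s j + s (j + 2)) +
        (f 0 * s 1 - f 1 * s 0 + f (N + 1) * s N - f N * s (N + 1)) := by
  induction N with
  | zero => simp
  | succ N ih =>
    rw [Finset.sum_range_succ, Finset.sum_range_succ, ih]; ring

/-- energy -/
noncomputable def en (n : ℕ) (α : ℝ) (t : ℕ) : ℝ :=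
  ∑ j ∈ Finset.range n, (cw n t (j + 1) : ℝ) * Real.sin ((j + 1 : ℕ) * α)

theorem en_step (n : ℕ) (hn : 1 ≤ n) (α : ℝ) (h1 : Real.sin ((n + 1 : ℕ) * α) = 1) (t : ℕ) :
    en n α (t + 1) = 2 * Real.cos α * en n α t - cw n t n := by
  have h := sum_parts (fun i => (cw n t i : ℝ)) (fun i => Real.sin ((i : ℕ) * α)) n
  simp only [sin_rec, h1, cw_zero, cw_top n t hn] at h
  unfold en
  have e : ∑ j ∈ Finset.range n, (cw n (t + 1) (j + 1) : ℝ) * Real.sin ((j + 1 : ℕ) * α) =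
      ∑ j ∈ Finset.range n, ((cw n t j : ℝ) + cw n t (j + 2)) * Real.sin ((j + 1 : ℕ) * α) := by
    refine Finset.sum_congr rfl fun j hj => ?_
    have : j + 1 ≤ n := by simpa using hj
    simp only [cw, if_pos this]
    push_cast; ring
  rw [e, h, Finset.mul_sum]
  have e2 : ∀ j, (cw n t (j + 1) : ℝ) * (2 * Real.cos α * Real.sin ((j + 1 : ℕ) * α)) =
    2 * Real.cos α * ((cw n t (j + 1) : ℝ) * Real.sin ((j + 1 : ℕ) * α)) := fun j => by ring
  simp only [e2]
  simp
  ring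

theorem en_zero (n : ℕ) (hn : 1 ≤ n) (α : ℝ) : en n α 0 = Real.sin α := by
  unfold en
  rw [Finset.sum_eq_single 0]
  · simp [cw]
  · intro b _ hb; simp [cw, hb]
  · intro h; simp at h; omega

theorem geom_bound (G E : ℕ → ℝ) (q : ℝ) (hq : 0 ≤ q) (hG : ∀ t, 0 ≤ G t) (hE : ∀ t, 0 ≤ E t)
    (hGq : ∀ t, q * G t ≤ G (t + 2)) (hstep : ∀ t, G t = E t - E (t + 1)) (K : ℕ) :
    ∀ t, G t * ∑ k ∈ Finset.range K, q ^ k ≤ E t := by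
  induction K with
  | zero => intro t; simpa using hE t
  | succ K ih =>
    intro t
    rw [Finset.sum_range_succ']
    have h1 : ∑ k ∈ Finset.range K, q ^ (k + 1) = q * ∑ k ∈ Finset.range K, q ^ k := by
      rw [Finset.mul_sum]; exact Finset.sum_congr rfl fun k _ => by ring
    rw [h1]
    have hS : 0 ≤ ∑ k ∈ Finset.range K, q ^ k := Finset.sum_nonneg fun k _ => pow_nonneg hq k
    have h2 := mul_le_mul_of_nonneg_right (hGq t) hS
    have h3 := ih (t + 2)
    have h4 := hG (t + 1)
    have h5 := hstep (t + 1)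
    have h6 := hstep t
    have e : t + 1 + 1 = t + 2 := rfl
    rw [e] at h5
    rw [pow_zero]
    nlinarith

theorem geom_limit (G E : ℕ → ℝ) (q : ℝ) (hq : 0 ≤ q) (hq1 : q < 1)
    (hG : ∀ t, 0 ≤ G t) (hE : ∀ t, 0 ≤ E t)
    (hGq : ∀ t, q * G t ≤ G (t + 2)) (hstep : ∀ t, G t = E t - E (t + 1)) (t : ℕ) :
    G t ≤ (1 - q) * E 0 := by
  have hEt : E t ≤ E 0 := by
    induction t with
    | zero => exact le_rfl
    | succ t ih => have := hG t; have := hstep t; linarith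
  have h1 : Filter.Tendsto (fun K => G t * ∑ k ∈ Finset.range K, q ^ k) Filter.atTop
      (nhds (G t * (1 - q)⁻¹)) :=
    ((hasSum_geometric_of_lt_one hq hq1).tendsto_sum_nat).const_mul _
  have h2 : G t * (1 - q)⁻¹ ≤ E t :=
    le_of_tendsto' h1 fun K => geom_bound G E q hq hG hE hGq hstep K t
  have h3 : 0 < 1 - q := by linarith
  have h4 : G t = (1 - q) * (G t * (1 - q)⁻¹) := by field_simp
  rw [h4]
  exact mul_le_mul_of_nonneg_left (h2.trans hEt) h3.le

theorem cw_bound (n t : ℕ) (hn : 20 ≤ n) (α : ℝ) (hα : α = Real.pi / (2 * (n + 1))) :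
    (cw n (t + 1) n : ℝ) / 2 ^ (t + 1) ≤ 6 * α ^ 3 * Real.cos α ^ t := by
  have hnR : (20 : ℝ) ≤ n := by exact_mod_cast hn
  have hpi := Real.pi_pos
  have hα0 : 0 < α := by rw [hα]; positivity
  have hmα : ((n : ℝ) + 1) * α = Real.pi / 2 := by rw [hα]; field_simp
  have hαs : 21 * α ≤ Real.pi / 2 := by rw [← hmα]; nlinarith
  have hsin : Real.sin ((n + 1 : ℕ) * α) = 1 := by
    push_cast; rw [hmα, Real.sin_pi_div_two]
  have hc : 0 < Real.cos α := Real.cos_pos_of_mem_Ioo ⟨by linarith, by linarith⟩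
  have hs : 0 < Real.sin α := Real.sin_pos_of_pos_of_lt_pi hα0 (by linarith)
  have hgrow := cw_growth n (by omega) (fun i => Real.sin ((i : ℕ) * (2 * α)))
    (2 * Real.cos (2 * α)) (by simp)
    (by
      have : ((n + 1 : ℕ) : ℝ) * (2 * α) = Real.pi := by push_cast; linarith
      simp only [this, Real.sin_pi])
    (by
      intro i h1 h2
      have h1' : (1 : ℝ) ≤ i := by exact_mod_cast h1
      have h2' : (i : ℝ) ≤ n := by exact_mod_cast h2
      apply Real.sin_pos_of_pos_of_lt_pi
      · positivity
      · nlinarith)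
    (fun i => sin_rec (2 * α) i)
  set c := Real.cos α with hcdef
  set s := Real.sin α with hsdef
  have hsc : s ^ 2 + c ^ 2 = 1 := Real.sin_sq_add_cos_sq α
  have hc2 : Real.cos (2 * α) = 2 * c ^ 2 - 1 := Real.cos_two_mul α
  set d := Real.cos (2 * α) with hd
  have hd0 : 0 < d := Real.cos_pos_of_mem_Ioo ⟨by linarith, by linarith⟩
  have hdc : d < c := Real.cos_lt_cos_of_nonneg_of_le_pi hα0.le (by linarith) (by linarith)
  have key := geom_limit (fun t => (cw n t n : ℝ) / (2 * c) ^ (t + 1))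
    (fun t => en n α t / (2 * c) ^ t) ((d / c) ^ 2) (by positivity)
    (by rw [div_pow, div_lt_one (by positivity)]; gcongr)
    (fun t => by positivity)
    (fun t => by
      apply div_nonneg _ (by positivity)
      unfold en
      refine Finset.sum_nonneg fun j hj => ?_
      have : j + 1 ≤ n := by simpa using hj
      have : ((j + 1 : ℕ) : ℝ) ≤ n := by exact_mod_cast this
      apply mul_nonneg (Nat.cast_nonneg _)
      apply Real.sin_nonneg_of_nonneg_of_le_pi
      · positivity
      · nlinarith)
    (fun t => by
      have := hgrow t
      have e : (d / c) ^ 2 * ((cw n t n : ℝ) / (2 * c) ^ (t + 1)) =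
        ((2 * d) ^ 2 * (cw n t n : ℝ)) / (2 * c) ^ (t + 2 + 1) := by
        field_simp
        ring
      show (d / c) ^ 2 * ((cw n t n : ℝ) / (2 * c) ^ (t + 1)) ≤ _
      rw [e]
      gcongr)
    (fun t => by
      rw [en_step n (by omega) α hsin t]
      field_simp
      ring) (t + 1)
  simp only [en_zero n (by omega) α, pow_zero, div_one] at key
  rw [div_le_iff₀ (by positivity)] at key
  have hsα : s ≤ α := Real.sin_le hα0.le
  rw [div_le_iff₀ (by positivity)]
  refine key.trans ?_
  have e : (1 - (d / c) ^ 2) * s * (2 * c) ^ (t + 1 + 1) =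
      2 * s * (c ^ 2 - d ^ 2) * (c ^ t * 2 ^ (t + 1)) := by
    field_simp
    ring
  rw [show Real.sin α = s from rfl, e]
  have h1 : c ^ 2 - d ^ 2 ≤ 3 * s ^ 2 := by
    rw [hc2]; nlinarith [sq_nonneg (s ^ 2), sq_nonneg s]
  have h2 : 2 * s * (c ^ 2 - d ^ 2) ≤ 6 * α ^ 3 := by
    calc 2 * s * (c ^ 2 - d ^ 2) ≤ 2 * s * (3 * s ^ 2) := by gcongr
      _ = 6 * s ^ 3 := by ring
      _ ≤ 6 * α ^ 3 := by gcongr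
  calc 2 * s * (c ^ 2 - d ^ 2) * (c ^ t * 2 ^ (t + 1)) ≤ 6 * α ^ 3 * (c ^ t * 2 ^ (t + 1)) := by
        gcongr
    _ = _ := by ring

theorem cos_exp_bound (α : ℝ) (h0 : 0 < α) (h1 : α ≤ 1 / 10) :
    Real.cos α ≤ Real.exp (-(49 / 100 * α ^ 2)) := by
  have hs := Real.sin_gt_sub_cube h0
  have h2 : 99 / 100 * α ≤ Real.sin α := by
    have : α ^ 3 ≤ α * (1 / 100) := by nlinarith [mul_pos h0 h0]
    nlinarith
  have h3 : (99 / 100 * α) ^ 2 ≤ Real.sin α ^ 2 := by gcongr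
  have h4 := Real.sin_sq_add_cos_sq α
  have h5 := Real.add_one_le_exp (-(98 / 100 * α ^ 2))
  have h6 : Real.exp (-(98 / 100 * α ^ 2)) = Real.exp (-(49 / 100 * α ^ 2)) ^ 2 := by
    rw [← Real.exp_nat_mul]; congr 1; push_cast; ring
  rw [h6] at h5
  apply le_of_sq_le_sq _ (Real.exp_pos _).le
  nlinarith

theorem exp_cube (y : ℝ) (hy : 0 < y) : Real.exp (-y) ≤ 27 / (19 * y ^ 3) := by
  have h1 := Real.add_one_le_exp (y / 3 - 1)
  have h2 : Real.exp (y / 3 - 1) ^ 3 * Real.exp 1 ^ 3 = Real.exp y := by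
    rw [← mul_pow, ← Real.exp_add, ← Real.exp_nat_mul]; congr 1; push_cast; ring
  have he := Real.exp_one_gt_d9
  have h3 : (19 : ℝ) ≤ Real.exp 1 ^ 3 := by
    calc (19 : ℝ) ≤ 2.7 ^ 3 := by norm_num
      _ ≤ _ := by gcongr; linarith
  have h4 : (y / 3) ^ 3 ≤ Real.exp (y / 3 - 1) ^ 3 := by gcongr; linarith
  have h5 : (y / 3) ^ 3 * 19 ≤ Real.exp y := by rw [← h2]; gcongr
  rw [Real.exp_neg, inv_eq_one_div, div_le_div_iff₀ (Real.exp_pos _) (by positivity)]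
  nlinarith

theorem walkProb_le_min (n t : ℕ) (hn : 20 ≤ n) (ht : n - 1 ≤ t) :
    walkProb 1 t (fun w => endsAt (n : ℤ) w ∧ maxEq (n : ℤ) w ∧ minGE 1 w) ≤
      min (Real.exp 25 / (n : ℝ) ^ 3) (64 * ((n : ℝ) / (t : ℝ)) ^ 3) := by
  obtain ⟨u, rfl⟩ : ∃ u, t = u + 1 := ⟨t - 1, by omega⟩
  refine (walkProb_le_cw n (u + 1)).trans ?_
  obtain ⟨α, hα⟩ : ∃ α : ℝ, α = Real.pi / (2 * (n + 1)) := ⟨_, rfl⟩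
  refine (cw_bound n u hn α hα).trans ?_
  have hnR : (20 : ℝ) ≤ n := by exact_mod_cast hn
  have huR : (18 : ℝ) ≤ u := by
    have : 18 ≤ u := by omega
    exact_mod_cast this
  have hpi := Real.pi_pos
  have hpi1 := Real.pi_gt_d2
  have hpi2 := Real.pi_lt_d2
  have hα0 : 0 < α := by rw [hα]; positivity
  have hmα : ((n : ℝ) + 1) * α = Real.pi / 2 := by rw [hα]; field_simp
  have hα1 : α ≤ 1 / 10 := by nlinarith
  have hnα : n * α ≤ 1.575 := by nlinarith
  have hnα2 : 1.49 ≤ n * α := by nlinarith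
  have hc1 : Real.cos α ≤ 1 := Real.cos_le_one α
  have hc0 : 0 ≤ Real.cos α := Real.cos_nonneg_of_mem_Icc ⟨by linarith, by linarith⟩
  apply le_min
  · rw [le_div_iff₀ (by positivity)]
    have h1 := Real.add_one_le_exp (25 : ℝ)
    have h2 : Real.cos α ^ u ≤ 1 := pow_le_one₀ hc0 hc1
    calc 6 * α ^ 3 * Real.cos α ^ u * n ^ 3 ≤ 6 * α ^ 3 * 1 * n ^ 3 := by gcongr
      _ = 6 * (n * α) ^ 3 := by ring
      _ ≤ 6 * 1.575 ^ 3 := by gcongr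
      _ ≤ 25 + 1 := by norm_num
      _ ≤ _ := h1
  · have h1 : Real.cos α ^ u ≤ Real.exp (-(u * (49 / 100 * α ^ 2))) := by
      calc Real.cos α ^ u ≤ Real.exp (-(49 / 100 * α ^ 2)) ^ u := by
            gcongr; exact cos_exp_bound α hα0 hα1
        _ = _ := by rw [← Real.exp_nat_mul]; congr 1; ring
    have h2 := h1.trans (exp_cube _ (by positivity))
    have hu0 : (0 : ℝ) < u := by linarith
    have hn0 : (0 : ℝ) < n := by linarith
    calc 6 * α ^ 3 * Real.cos α ^ u
        ≤ 6 * α ^ 3 * (27 / (19 * (u * (49 / 100 * α ^ 2)) ^ 3)) := by gcongr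
      _ = (6 * 27 / 19 / (49 / 100) ^ 3) * (1 / (n * α)) ^ 3 * (n / u) ^ 3 := by
          field_simp
      _ ≤ (6 * 27 / 19 / (49 / 100) ^ 3) * (1 / 1.49) ^ 3 * (1.06 * (n / (u + 1 : ℕ))) ^ 3 := by
          have : (n : ℝ) / u ≤ 1.06 * (n / (u + 1 : ℕ)) := by
            push_cast
            rw [← mul_div_assoc, div_le_div_iff₀ hu0 (by positivity)]
            nlinarith
          gcongr
      _ = ((6 * 27 / 19 / (49 / 100) ^ 3) * (1 / 1.49) ^ 3 * 1.06 ^ 3) *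
            (n / (u + 1 : ℕ)) ^ 3 := by ring
      _ ≤ _ := by gcongr; norm_num
end

section
/- Let d ≥ 2 and n ≥ 2 be integers and let B = {1,…,n}^d ⊆ ℤ^d. For every pair of points u, v ∈ B, π_u(v) ≤ (8·log n + 4) · π_v(u), where log denotes the natural logarithm. -/
/-- A grid walk of length `t` from `v ∈ ℤ^d`: a function on `{0,…,t}` starting at `v`
whose consecutive values differ by exactly `1` in `ℓ¹`-norm. -/
def IsGridWalkD (d : ℕ) (v : Fin d → ℤ) (t : ℕ) (w : Fin (t + 1) → Fin d → ℤ) : Prop :=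
  w 0 = v ∧ ∀ j : Fin t, (∑ k : Fin d, |w j.succ k - w j.castSucc k|) = 1

/-- Membership in the box `B = {1,…,n}^d`. -/
def InBoxD (d n : ℕ) (p : Fin d → ℤ) : Prop :=
  ∀ k : Fin d, 1 ≤ p k ∧ p k ≤ (n : ℤ)

/-- `N_t(v, u)`: the number of grid walks of length `t` from `v` staying in `B \ {u}`
before time `t` and ending at `u` at time `t`. -/
noncomputable def gridHitCountD (d n : ℕ) (v u : Fin d → ℤ) (t : ℕ) : ℕ :=
  {w : Fin (t + 1) → Fin d → ℤ | IsGridWalkD d v t w ∧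
    (∀ j : Fin t, InBoxD d n (w j.castSucc) ∧ w j.castSucc ≠ u) ∧
    w (Fin.last t) = u}.ncard

/-- The potential `π_u(v) = Σ_{t ≥ 0} N_t(v,u) / (2d)^t`. -/
noncomputable def gridPotentialD (d n : ℕ) (u v : Fin d → ℤ) : ℝ :=
  ∑' t : ℕ, (gridHitCountD d n v u t : ℝ) / (2 * d) ^ t

namespace PotSwap

/-- unit vector -/
def ee {d : ℕ} (i : Fin d) : Fin d → ℤ := Pi.single i 1

/-- signed unit step -/
def step {d : ℕ} (s : Fin d × Bool) : Fin d → ℤ := if s.2 then ee s.1 else -ee s.1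

lemma step_norm {d : ℕ} (s : Fin d × Bool) : ∑ k, |step s k| = 1 := by
  have h : ∀ k, |step s k| = if k = s.1 then 1 else 0 := by
    intro k
    unfold step ee
    split_ifs <;> simp_all [Pi.single_apply]
  simp [h]

lemma exists_step {d : ℕ} (z : Fin d → ℤ) (h : ∑ k, |z k| = 1) : ∃ s, z = step s := by
  classical
  obtain ⟨k, hk⟩ : ∃ k, z k ≠ 0 := by
    by_contra! hc
    simp [hc] at h
  have h1 : 1 ≤ |z k| := Int.one_le_abs hk
  have h2 := Finset.add_sum_erase Finset.univ (fun k => |z k|) (Finset.mem_univ k)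
  have h3 : 0 ≤ ∑ j ∈ Finset.univ.erase k, |z j| := Finset.sum_nonneg (fun _ _ => abs_nonneg _)
  simp only [h] at h2
  have h4 : ∑ j ∈ Finset.univ.erase k, |z j| = 0 := by omega
  rw [Finset.sum_eq_zero_iff_of_nonneg (fun _ _ => abs_nonneg _)] at h4
  have h5 : |z k| = 1 := by omega
  have h6 : ∀ j, j ≠ k → z j = 0 := fun j hj => by
    simpa using h4 j (by simp [hj])
  rcases (abs_eq (by norm_num)).1 h5 with h7 | h7
  · refine ⟨(k, true), funext fun j => ?_⟩
    by_cases hj : j = k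
    · subst hj; simp [step, ee, h7]
    · simp [step, ee, h6 j hj, hj]
  · refine ⟨(k, false), funext fun j => ?_⟩
    by_cases hj : j = k
    · subst hj; simp [step, ee, h7]
    · simp [step, ee, h6 j hj, hj]

lemma step_injective {d : ℕ} : Function.Injective (step (d := d)) := by
  rintro ⟨i, b⟩ ⟨j, c⟩ h
  have h1 := congrFun h i
  have h2 := congrFun h j
  by_cases hij : i = j
  · subst hij
    cases b <;> cases c <;> simp [step, ee] at h1 ⊢
  · exfalso
    cases b <;> cases c <;> simp [step, ee, hij] at h1

/-- the walks counted -/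
def W (d n : ℕ) (u v : Fin d → ℤ) (t : ℕ) : Set (Fin (t + 1) → Fin d → ℤ) :=
  {w | IsGridWalkD d v t w ∧
    (∀ j : Fin t, InBoxD d n (w j.castSucc) ∧ w j.castSucc ≠ u) ∧
    w (Fin.last t) = u}

lemma W_zero_self (d n : ℕ) (u : Fin d → ℤ) : W d n u u 0 = {fun _ => u} := by
  ext w
  simp only [W, IsGridWalkD, Set.mem_ofPred_eq, Set.mem_singleton_iff]
  constructor
  · rintro ⟨⟨h, -⟩, -⟩
    funext j
    have hj : j = 0 := Fin.ext (by have := j.isLt; simp only [Fin.val_zero]; omega)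
    rw [hj, h]
  · rintro rfl
    simp

lemma W_zero_ne (d n : ℕ) (u v : Fin d → ℤ) (h : v ≠ u) : W d n u v 0 = ∅ := by
  ext w
  simp only [W, IsGridWalkD, Set.mem_ofPred_eq, Set.mem_empty_iff_false, iff_false]
  rintro ⟨⟨h1, -⟩, -, h2⟩
  exact h (h1.symm.trans h2)

lemma W_succ_bad (d n : ℕ) (u v : Fin d → ℤ) (t : ℕ) (h : ¬ (InBoxD d n v ∧ v ≠ u)) :
    W d n u v (t + 1) = ∅ := by
  ext w
  simp only [W, IsGridWalkD, Set.mem_ofPred_eq, Set.mem_empty_iff_false, iff_false]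
  rintro ⟨⟨h1, -⟩, h2, -⟩
  have := h2 0
  rw [Fin.castSucc_zero, h1] at this
  exact h this

lemma cons_mem (d n : ℕ) (u v : Fin d → ℤ) (t : ℕ) (hv : InBoxD d n v ∧ v ≠ u)
    (s : Fin d × Bool) (w : Fin (t + 1) → Fin d → ℤ) (hw : w ∈ W d n u (v + step s) t) :
    (Fin.cons v w : Fin (t + 2) → Fin d → ℤ) ∈ W d n u v (t + 1) := by
  obtain ⟨⟨h1, h2⟩, h3, h4⟩ := hw
  refine ⟨⟨by simp, ?_⟩, ?_, ?_⟩
  · intro j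
    refine Fin.cases ?_ (fun j => ?_) j
    · simp [h1, step_norm]
    · rw [Fin.cons_succ, ← Fin.succ_castSucc, Fin.cons_succ]; exact h2 j
  · intro j
    refine Fin.cases ?_ (fun j => ?_) j
    · simpa using hv
    · rw [← Fin.succ_castSucc, Fin.cons_succ]; exact h3 j
  · rw [← Fin.succ_last, Fin.cons_succ]; exact h4

lemma W_succ (d n : ℕ) (u v : Fin d → ℤ) (t : ℕ) (hv : InBoxD d n v ∧ v ≠ u) :
    W d n u v (t + 1) = ⋃ s : Fin d × Bool,
      Set.image (fun w => (Fin.cons v w : Fin (t + 2) → Fin d → ℤ)) (W d n u (v + step s) t) := by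
  ext w
  simp only [Set.mem_iUnion, Set.mem_image]
  constructor
  · rintro ⟨⟨h1, h2⟩, h3, h4⟩
    obtain ⟨s, hs⟩ := exists_step (w (Fin.succ 0) - w 0) (by simpa using h2 0)
    refine ⟨s, Fin.tail w, ⟨⟨?_, ?_⟩, ?_, ?_⟩, ?_⟩
    · rw [← hs, ← h1]; simp [Fin.tail]
    · intro j
      exact h2 j.succ
    · intro j
      exact h3 j.succ
    · exact h4
    · rw [← h1]; exact Fin.cons_self_tail w
  · rintro ⟨s, w, hw, rfl⟩
    exact cons_mem d n u v t hv s w hw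

lemma W_finite (d n : ℕ) (u : Fin d → ℤ) (t : ℕ) : ∀ v, (W d n u v t).Finite := by
  induction t with
  | zero =>
    intro v
    by_cases h : v = u
    · subst h; rw [W_zero_self]; exact Set.finite_singleton _
    · rw [W_zero_ne _ _ _ _ h]; exact Set.finite_empty
  | succ t ih =>
    intro v
    by_cases h : InBoxD d n v ∧ v ≠ u
    · rw [W_succ _ _ _ _ _ h]
      exact Set.finite_iUnion fun s => (ih _).image _
    · rw [W_succ_bad _ _ _ _ _ h]; exact Set.finite_empty

lemma count_succ (d n : ℕ) (u v : Fin d → ℤ) (t : ℕ) (hv : InBoxD d n v ∧ v ≠ u) :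
    gridHitCountD d n v u (t + 1) =
      ∑ i, (gridHitCountD d n (v + ee i) u t + gridHitCountD d n (v - ee i) u t) := by
  have key : (W d n u v (t + 1)).ncard = ∑ s : Fin d × Bool, (W d n u (v + step s) t).ncard := by
    rw [W_succ _ _ _ _ _ hv, Set.ncard_iUnion_of_finite]
    · rw [finsum_eq_sum_of_fintype]
      refine Finset.sum_congr rfl fun s _ => ?_
      exact Set.ncard_image_of_injective _ (Fin.cons_right_injective (α := fun _ => Fin d → ℤ) v)
    · exact fun s => (W_finite _ _ _ _ _).image _
    · intro s s' hss
      rw [Function.onFun, Set.disjoint_left]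
      rintro _ ⟨w, hw, rfl⟩ ⟨w', hw', h⟩
      have h2 : w' = w := Fin.cons_right_injective (α := fun _ => Fin d → ℤ) v h
      subst h2
      have := hw.1.1.symm.trans hw'.1.1
      exact hss (step_injective (add_left_cancel this))
  change (W d n u v (t + 1)).ncard = ∑ i, ((W d n u (v + ee i) t).ncard +
    (W d n u (v - ee i) t).ncard)
  rw [key, Fintype.sum_prod_type]
  simp [step, sub_eq_add_neg]

lemma count_zero_self (d n : ℕ) (u : Fin d → ℤ) : gridHitCountD d n u u 0 = 1 := by
  change (W d n u u 0).ncard = 1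
  rw [W_zero_self, Set.ncard_singleton]

lemma count_zero_ne (d n : ℕ) (u v : Fin d → ℤ) (h : v ≠ u) : gridHitCountD d n v u 0 = 0 := by
  change (W d n u v 0).ncard = 0
  rw [W_zero_ne _ _ _ _ h, Set.ncard_empty]

lemma count_succ_bad (d n : ℕ) (u v : Fin d → ℤ) (t : ℕ) (h : ¬ (InBoxD d n v ∧ v ≠ u)) :
    gridHitCountD d n v u (t + 1) = 0 := by
  change (W d n u v (t + 1)).ncard = 0
  rw [W_succ_bad _ _ _ _ _ h, Set.ncard_empty]

/-- summand -/
noncomputable def q (d n : ℕ) (u v : Fin d → ℤ) (t : ℕ) : ℝ :=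
  (gridHitCountD d n v u t : ℝ) / (2 * d) ^ t

lemma q_nonneg (d n : ℕ) (u v : Fin d → ℤ) (t : ℕ) : 0 ≤ q d n u v t := by
  unfold q; positivity

lemma q_succ (d n : ℕ) (u v : Fin d → ℤ) (t : ℕ) (hv : InBoxD d n v ∧ v ≠ u) :
    q d n u v (t + 1) = (∑ i, (q d n u (v + ee i) t + q d n u (v - ee i) t)) / (2 * d) := by
  unfold q
  rw [count_succ _ _ _ _ _ hv]
  simp only [← add_div]
  rw [← Finset.sum_div, div_div, ← pow_succ]
  push_cast
  rfl

lemma partial_le (d n : ℕ) (hd : 2 ≤ d) (u : Fin d → ℤ) (T : ℕ) :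
    ∀ v, ∑ t ∈ Finset.range T, q d n u v t ≤ 1 := by
  have hd' : (0 : ℝ) < d := by exact_mod_cast (by omega : 0 < d)
  induction T with
  | zero => intro v; simp
  | succ T ih =>
    intro v
    rw [Finset.sum_range_succ']
    by_cases h : InBoxD d n v ∧ v ≠ u
    · simp only [q_succ _ _ _ _ _ h]
      rw [← Finset.sum_div, Finset.sum_comm]
      have h0 : q d n u v 0 = 0 := by simp [q, count_zero_ne _ _ _ _ h.2]
      rw [h0, add_zero, div_le_one (by positivity)]
      calc _ ≤ ∑ i : Fin d, (2 : ℝ) := Finset.sum_le_sum fun i _ => by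
            rw [Finset.sum_add_distrib]; linarith [ih (v + ee i), ih (v - ee i)]
        _ = 2 * d := by simp [mul_comm]
    · have h0 : ∀ t, q d n u v (t + 1) = 0 := fun t => by simp [q, count_succ_bad _ _ _ _ t h]
      simp only [h0, Finset.sum_const_zero, zero_add]
      by_cases hvu : v = u
      · subst hvu; simp [q, count_zero_self]
      · simp [q, count_zero_ne _ _ _ _ hvu]

lemma q_summable (d n : ℕ) (hd : 2 ≤ d) (u v : Fin d → ℤ) : Summable (q d n u v) :=
  summable_of_sum_range_le (fun t => q_nonneg d n u v t) (fun T => partial_le d n hd u T v)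

lemma pot_eq (d n : ℕ) (u v : Fin d → ℤ) : gridPotentialD d n u v = ∑' t, q d n u v t := rfl

lemma pot_nonneg (d n : ℕ) (u v : Fin d → ℤ) : 0 ≤ gridPotentialD d n u v :=
  tsum_nonneg fun t => q_nonneg d n u v t

lemma pot_self (d n : ℕ) (hd : 2 ≤ d) (u : Fin d → ℤ) : gridPotentialD d n u u = 1 := by
  rw [pot_eq, (q_summable d n hd u u).tsum_eq_zero_add]
  have h0 : ∀ t, q d n u u (t + 1) = 0 := fun t => by
    simp [q, count_succ_bad d n u u t (by simp)]
  simp only [h0, tsum_zero, add_zero]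
  simp [q, count_zero_self]

lemma pot_out (d n : ℕ) (hd : 2 ≤ d) (u v : Fin d → ℤ) (hu : InBoxD d n u)
    (hv : ¬ InBoxD d n v) : gridPotentialD d n u v = 0 := by
  rw [pot_eq, (q_summable d n hd u v).tsum_eq_zero_add]
  have h0 : ∀ t, q d n u v (t + 1) = 0 := fun t => by
    simp [q, count_succ_bad d n u v t (by simp [hv])]
  have h1 : v ≠ u := by rintro rfl; exact hv hu
  simp only [h0, tsum_zero, add_zero]
  simp [q, count_zero_ne _ _ _ _ h1]

lemma pot_harm (d n : ℕ) (hd : 2 ≤ d) (u v : Fin d → ℤ) (hv : InBoxD d n v ∧ v ≠ u) :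
    2 * d * gridPotentialD d n u v =
      ∑ i, (gridPotentialD d n u (v + ee i) + gridPotentialD d n u (v - ee i)) := by
  have hd' : (0 : ℝ) < d := by exact_mod_cast (by omega : 0 < d)
  have hs := fun w => q_summable d n hd u w
  rw [pot_eq, (hs v).tsum_eq_zero_add]
  simp only [q_succ _ _ _ _ _ hv]
  rw [tsum_div_const, Summable.tsum_finsetSum (fun i _ => (hs _).add (hs _))]
  have h0 : q d n u v 0 = 0 := by simp [q, count_zero_ne _ _ _ _ hv.2]
  rw [h0, zero_add, mul_div_cancel₀ _ (by positivity)]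
  refine Finset.sum_congr rfl fun i _ => ?_
  rw [(hs _).tsum_add (hs _)]
  rfl

/-- discrete Laplacian -/
noncomputable def lap {d : ℕ} (h : (Fin d → ℤ) → ℝ) (x : Fin d → ℤ) : ℝ :=
  2 * d * h x - ∑ i, (h (x + ee i) + h (x - ee i))

lemma box_finite (d n : ℕ) : {p | InBoxD d n p}.Finite := by
  refine (Set.Finite.pi' (ι := Fin d) (t := fun _ => Set.Icc (1 : ℤ) n)
    (fun _ => Set.finite_Icc _ _)).subset ?_
  intro p hp k
  exact hp k

lemma summ_mul {d n : ℕ} (f h : (Fin d → ℤ) → ℝ) (hf : ∀ x, ¬ InBoxD d n x → f x = 0) :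
    Summable (fun x => f x * h x) := by
  refine summable_of_hasFiniteSupport ((box_finite d n).subset ?_)
  intro x hx
  by_contra hc
  exact hx (by simp [hf x hc])

lemma summ_grad {d n : ℕ} (f h : (Fin d → ℤ) → ℝ) (hf : ∀ x, ¬ InBoxD d n x → f x = 0) (i : Fin d) :
    Summable (fun x => (f (x + ee i) - f x) * h x) := by
  have h1 := summ_mul f h hf
  have h2 := summ_mul f (fun x => h (x - ee i)) hf
  rw [← (Equiv.addRight (ee i)).summable_iff] at h2
  refine (h2.sub h1).congr fun x => ?_
  simp [Function.comp_def]
  ring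

lemma green {d n : ℕ} (f h : (Fin d → ℤ) → ℝ) (hf : ∀ x, ¬ InBoxD d n x → f x = 0) :
    ∑' x, f x * lap h x = ∑ i, ∑' x, (f (x + ee i) - f x) * (h (x + ee i) - h x) := by
  have e1 : ∀ x, f x * lap h x =
      ∑ i, (f x * (h x - h (x - ee i)) - f x * (h (x + ee i) - h x)) := by
    intro x
    simp only [lap, ← mul_sub, ← Finset.mul_sum]
    congr 1
    have : (2 * d * h x : ℝ) = ∑ i : Fin d, 2 * h x := by simp; ring
    rw [this, ← Finset.sum_sub_distrib]
    exact Finset.sum_congr rfl fun i _ => by ring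
  have s1 : ∀ i, Summable fun x => f x * (h x - h (x - ee i)) := fun i =>
    summ_mul f (fun x => h x - h (x - ee i)) hf
  have s2 : ∀ i, Summable fun x => f x * (h (x + ee i) - h x) := fun i =>
    summ_mul f (fun x => h (x + ee i) - h x) hf
  simp only [e1]
  rw [Summable.tsum_finsetSum (fun i _ => (s1 i).sub (s2 i))]
  refine Finset.sum_congr rfl fun i _ => ?_
  rw [(s1 i).tsum_sub (s2 i), ← (Equiv.addRight (ee i)).tsum_eq (fun x => f x * (h x - h (x - ee i))),
    ← Summable.tsum_sub _ (s2 i)]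
  · refine tsum_congr fun x => ?_
    simp
    ring
  · exact ((Equiv.addRight (ee i)).summable_iff).2 (s1 i)

/-- points of the quadrant -/
def pt {d : ℕ} (v : Fin d → ℤ) (i j : Fin d) (p : ℕ × ℕ) : Fin d → ℤ :=
  v + (p.1 : ℤ) • ee i + (p.2 : ℤ) • ee j

lemma pt_i {d : ℕ} (v : Fin d → ℤ) (i j : Fin d) (hij : i ≠ j) (p : ℕ × ℕ) :
    pt v i j p i = v i + p.1 := by
  simp [pt, ee, hij]

lemma pt_j {d : ℕ} (v : Fin d → ℤ) (i j : Fin d) (hij : i ≠ j) (p : ℕ × ℕ) :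
    pt v i j p j = v j + p.2 := by
  simp [pt, ee, hij.symm]

/-- weighted level sums: telescoping step -/
lemma level_step (G : ℕ → ℕ → ℝ) (k : ℕ) :
    (∑ a ∈ Finset.range (k + 1), G a (k - a)) / (k + 1)
      - (∑ a ∈ Finset.range (k + 2), G a (k + 1 - a)) / (k + 2) =
    ∑ a ∈ Finset.range (k + 1),
      ((a + 1 : ℝ) / ((k + 1) * (k + 2)) * (G a (k - a) - G (a + 1) (k - a)) +
       ((k - a : ℕ) + 1 : ℝ) / ((k + 1) * (k + 2)) * (G a (k - a) - G a (k - a + 1))) := by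
  have h1 : ∑ a ∈ Finset.range (k + 2), (a : ℝ) * G a (k + 1 - a) =
      ∑ a ∈ Finset.range (k + 1), (a + 1 : ℝ) * G (a + 1) (k - a) := by
    rw [Finset.sum_range_succ']
    simp
  have h2 : ∑ a ∈ Finset.range (k + 2), ((k + 1 : ℝ) - a) * G a (k + 1 - a) =
      ∑ a ∈ Finset.range (k + 1), ((k - a : ℕ) + 1 : ℝ) * G a (k - a + 1) := by
    rw [Finset.sum_range_succ]
    push_cast
    rw [sub_self, zero_mul, add_zero]
    refine Finset.sum_congr rfl fun a ha => ?_
    have : a ≤ k := by simp at ha; omega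
    rw [Nat.cast_sub this, Nat.sub_add_comm this]
    ring
  have h3 : (k + 1 : ℝ) * ∑ a ∈ Finset.range (k + 2), G a (k + 1 - a) =
      ∑ a ∈ Finset.range (k + 1), (a + 1 : ℝ) * G (a + 1) (k - a) +
      ∑ a ∈ Finset.range (k + 1), ((k - a : ℕ) + 1 : ℝ) * G a (k - a + 1) := by
    rw [← h1, ← h2, ← Finset.sum_add_distrib, Finset.mul_sum]
    exact Finset.sum_congr rfl fun a _ => by ring
  have h4 : (k + 2 : ℝ) * ∑ a ∈ Finset.range (k + 1), G a (k - a) =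
      ∑ a ∈ Finset.range (k + 1), ((a + 1 : ℝ) + ((k - a : ℕ) + 1 : ℝ)) * G a (k - a) := by
    rw [Finset.mul_sum]
    refine Finset.sum_congr rfl fun a ha => ?_
    have : a ≤ k := by simp at ha; omega
    rw [Nat.cast_sub this]
    ring
  have hk1 : (k + 1 : ℝ) ≠ 0 := by positivity
  have hk2 : (k + 2 : ℝ) ≠ 0 := by positivity
  rw [div_sub_div _ _ hk1 hk2, mul_comm _ (k + 2 : ℝ), h4, h3, ← Finset.sum_add_distrib,
    ← Finset.sum_sub_distrib, Finset.sum_div]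
  refine Finset.sum_congr rfl fun a _ => ?_
  field_simp
  ring

/-- Cauchy-Schwarz on one level -/
lemma level_bound (G : ℕ → ℕ → ℝ) (k : ℕ) (L : ℝ) (hL : 0 < L) :
    2 * ((∑ a ∈ Finset.range (k + 1), G a (k - a)) / (k + 1)
      - (∑ a ∈ Finset.range (k + 2), G a (k + 1 - a)) / (k + 2)) ≤
    (1 / (k + 1 : ℝ)) / L + L * ∑ a ∈ Finset.range (k + 1),
      ((G (a + 1) (k - a) - G a (k - a)) ^ 2 + (G a (k - a + 1) - G a (k - a)) ^ 2) := by
  have amgm : ∀ α X : ℝ, 2 * (α * X) ≤ α ^ 2 / L + L * X ^ 2 := by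
    intro α X
    have : 0 ≤ (α - L * X) ^ 2 / L := by positivity
    have e : (α - L * X) ^ 2 / L = α ^ 2 / L + L * X ^ 2 - 2 * (α * X) := by
      field_simp; ring
    linarith
  have hc : (1 / (k + 1 : ℝ)) / L = ∑ a ∈ Finset.range (k + 1), (1 / (k + 1 : ℝ)) ^ 2 / L := by
    simp; field_simp
  rw [level_step, hc, Finset.mul_sum, Finset.mul_sum, ← Finset.sum_add_distrib]
  refine Finset.sum_le_sum fun a ha => ?_
  have hak : a ≤ k := by simp at ha; omega
  set A : ℝ := (a + 1 : ℝ) / ((k + 1) * (k + 2)) with hA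
  set C : ℝ := ((k - a : ℕ) + 1 : ℝ) / ((k + 1) * (k + 2)) with hC
  have hA0 : 0 ≤ A := by positivity
  have hC0 : 0 ≤ C := by positivity
  have hAC : A + C = 1 / (k + 1 : ℝ) := by
    rw [hA, hC, Nat.cast_sub hak]; field_simp; ring
  have h1 := amgm A (G a (k - a) - G (a + 1) (k - a))
  have h2 := amgm C (G a (k - a) - G a (k - a + 1))
  have h3 : A ^ 2 / L + C ^ 2 / L ≤ (1 / (k + 1 : ℝ)) ^ 2 / L := by
    rw [← add_div, ← hAC]
    gcongr
    nlinarith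
  have e1 : (G a (k - a) - G (a + 1) (k - a)) ^ 2 = (G (a + 1) (k - a) - G a (k - a)) ^ 2 := by ring
  have e2 : (G a (k - a) - G a (k - a + 1)) ^ 2 = (G a (k - a + 1) - G a (k - a)) ^ 2 := by ring
  rw [e1] at h1
  rw [e2] at h2
  linarith

lemma plane_bound {d n : ℕ} (hn : 2 ≤ n) (h : (Fin d → ℤ) → ℝ)
    (hh : ∀ x, ¬ InBoxD d n x → h x = 0) (v : Fin d → ℤ) (hv : InBoxD d n v) (hv1 : h v = 1)
    (i j : Fin d) (hij : i ≠ j) (L : ℝ) (hL : 0 < L)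
    (hLE : ∑ k ∈ Finset.range (2 * n - 1), 1 / (k + 1 : ℝ) ≤ L) :
    1 ≤ L * (∑' x, (h (x + ee i) - h x) ^ 2 + ∑' x, (h (x + ee j) - h x) ^ 2) := by
  set G : ℕ → ℕ → ℝ := fun a b => h (pt v i j (a, b)) with hG
  set A : ℕ → ℝ := fun k => (∑ a ∈ Finset.range (k + 1), G a (k - a)) / (k + 1) with hA
  set K := 2 * n - 1 with hK
  have hA0 : A 0 = 1 := by simp [hA, hG, pt, hv1]
  have hAK : A K = 0 := by
    simp only [hA]
    rw [Finset.sum_eq_zero, zero_div]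
    intro a ha
    refine hh _ fun hb => ?_
    have h1 := (hb i).2
    have h2 := (hb j).2
    rw [pt_i _ _ _ hij] at h1
    rw [pt_j _ _ _ hij] at h2
    have h3 := (hv i).1
    have h4 := (hv j).1
    simp at ha h1 h2
    omega
  have hsum : ∀ l : Fin d, Summable fun x => (h (x + ee l) - h x) ^ 2 := by
    intro l
    simpa only [sq] using summ_grad h (fun x => h (x + ee l) - h x) hh l
  set S : Finset (Σ _ : ℕ, ℕ) := (Finset.range K).sigma (fun k => Finset.range (k + 1)) with hS
  have hinj : Set.InjOn (fun s : Σ _ : ℕ, ℕ => pt v i j (s.2, s.1 - s.2)) S := by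
    rintro ⟨k, a⟩ hs ⟨k', a'⟩ hs' heq
    have h1 := congrFun heq i
    have h2 := congrFun heq j
    simp only [pt_i _ _ _ hij, pt_j _ _ _ hij] at h1 h2
    simp [hS] at hs hs'
    have ha : a = a' := by omega
    have hk : k = k' := by omega
    subst ha hk; rfl
  have hle : ∀ l : Fin d, ∑ k ∈ Finset.range K, ∑ a ∈ Finset.range (k + 1),
      (h (pt v i j (a, k - a) + ee l) - h (pt v i j (a, k - a))) ^ 2 ≤
      ∑' x, (h (x + ee l) - h x) ^ 2 := by
    intro l
    rw [Finset.sum_sigma']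
    have := (hsum l).sum_le_tsum (S.image (fun s : Σ _ : ℕ, ℕ => pt v i j (s.2, s.1 - s.2)))
      (fun _ _ => sq_nonneg _)
    rwa [Finset.sum_image hinj] at this
  have tele : ∑ k ∈ Finset.range K, (A k - A (k + 1)) = 1 := by
    rw [Finset.sum_range_sub', hA0, hAK, sub_zero]
  have hi : ∀ a b, pt v i j (a, b) + ee i = pt v i j (a + 1, b) := by
    intro a b; simp only [pt]; push_cast; rw [add_smul, one_smul]; abel
  have hj : ∀ a b, pt v i j (a, b) + ee j = pt v i j (a, b + 1) := by
    intro a b; simp only [pt]; push_cast; rw [add_smul, one_smul]; abel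
  have main : ∑ k ∈ Finset.range K, 2 * (A k - A (k + 1)) ≤ ∑ k ∈ Finset.range K,
      ((1 / (k + 1 : ℝ)) / L + L * ∑ a ∈ Finset.range (k + 1),
      ((G (a + 1) (k - a) - G a (k - a)) ^ 2 + (G a (k - a + 1) - G a (k - a)) ^ 2)) := by
    refine Finset.sum_le_sum fun k _ => ?_
    have := level_bound G k L hL
    simp only [hA]
    push_cast
    rw [show (k : ℝ) + 1 + 1 = k + 2 by ring]
    exact this
  rw [← Finset.mul_sum, tele, Finset.sum_add_distrib, ← Finset.sum_div, ← Finset.mul_sum] at main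
  simp only [Finset.sum_add_distrib] at main
  have l1 := hle i
  have l2 := hle j
  simp only [hi, hj] at l1 l2
  have h5 : (∑ k ∈ Finset.range K, 1 / (k + 1 : ℝ)) / L ≤ 1 := by
    rw [div_le_one hL]; exact hLE
  have h6 := mul_le_mul_of_nonneg_left (add_le_add l1 l2) hL.le
  simp only [hG] at main
  linarith

lemma harm_bound (n : ℕ) (hn : 2 ≤ n) :
    ∑ k ∈ Finset.range (2 * n - 1), 1 / (k + 1 : ℝ) ≤ 1 + 2 * Real.log n := by
  have h := harmonic_le_one_add_log (2 * n - 1)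
  have e : ((harmonic (2 * n - 1) : ℚ) : ℝ) = ∑ k ∈ Finset.range (2 * n - 1), 1 / (k + 1 : ℝ) := by
    simp [harmonic]
  rw [e] at h
  have h2 : Real.log ((2 * n - 1 : ℕ) : ℝ) ≤ Real.log ((n : ℝ) ^ 2) := by
    apply Real.log_le_log
    · exact_mod_cast (by omega : 0 < 2 * n - 1)
    · have : 2 * n - 1 ≤ n ^ 2 := by
        have : 2 * n ≤ n ^ 2 := by nlinarith
        omega
      exact_mod_cast this
  rw [Real.log_pow] at h2
  push_cast at h2
  linarith

lemma energy_bound {d n : ℕ} (hd : 2 ≤ d) (hn : 2 ≤ n) (h : (Fin d → ℤ) → ℝ)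
    (hh : ∀ x, ¬ InBoxD d n x → h x = 0) (v : Fin d → ℤ) (hv : InBoxD d n v) (hv1 : h v = 1) :
    (d : ℝ) ≤ (1 + 2 * Real.log n) * (2 * ∑ i, ∑' x, (h (x + ee i) - h x) ^ 2) := by
  haveI : NeZero d := ⟨by omega⟩
  have hlog : 0 ≤ Real.log n := Real.log_natCast_nonneg n
  have hp : ∀ i : Fin d, (1 : ℝ) ≤ (1 + 2 * Real.log n) *
      (∑' x, (h (x + ee i) - h x) ^ 2 + ∑' x, (h (x + ee (i + 1)) - h x) ^ 2) := by
    intro i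
    refine plane_bound hn h hh v hv hv1 i (i + 1) ?_ _ (by linarith) (harm_bound n hn)
    intro hc
    have h1 : (1 : Fin d) = 0 := by simpa using hc.symm
    have := congrArg Fin.val h1
    rw [Fin.val_one', Fin.val_zero, Nat.mod_eq_of_lt (by omega)] at this
    omega
  have hs := Finset.sum_le_sum (s := Finset.univ) (fun i _ => hp i)
  rw [← Finset.mul_sum, Finset.sum_add_distrib] at hs
  have e := Equiv.sum_comp (Equiv.addRight (1 : Fin d))
    (fun i => ∑' x, (h (x + ee i) - h x) ^ 2)
  simp only [Equiv.coe_addRight] at e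
  rw [e] at hs
  simp at hs
  rw [two_mul (∑ i, ∑' x, (h (x + ee i) - h x) ^ 2)]
  exact hs

lemma lap_pair (d n : ℕ) (hd : 2 ≤ d) (f : (Fin d → ℤ) → ℝ)
    (hf : ∀ x, ¬ InBoxD d n x → f x = 0) (v : Fin d → ℤ) :
    ∑' x, f x * lap (gridPotentialD d n v) x = f v * lap (gridPotentialD d n v) v := by
  refine tsum_eq_single v fun x hx => ?_
  by_cases hb : InBoxD d n x
  · have := pot_harm d n hd v x ⟨hb, hx⟩
    rw [lap, this, sub_self, mul_zero]
  · rw [hf x hb, zero_mul]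

end PotSwap

/-- For integers `d ≥ 2` and `n ≥ 2` and all `u, v ∈ B = {1,…,n}^d`,
`π_u(v) ≤ (8 log n + 4) · π_v(u)`. -/
theorem potential_swap_source_target (d n : ℕ) (hd : 2 ≤ d) (hn : 2 ≤ n)
    (u v : Fin d → ℤ) (hu : InBoxD d n u) (hv : InBoxD d n v) :
    gridPotentialD d n u v ≤ (8 * Real.log n + 4) * gridPotentialD d n v u := by

  have hf := fun x => PotSwap.pot_out d n hd u x hu
  have hh := fun x => PotSwap.pot_out d n hd v x hv
  have hd' : (0 : ℝ) < d := by exact_mod_cast (by omega : 0 < d)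
  have hlog : 0 ≤ Real.log n := Real.log_natCast_nonneg n
  set f := gridPotentialD d n u with hfdef
  set h := gridPotentialD d n v with hhdef
  have hfv : f v * PotSwap.lap h v = h u * PotSwap.lap f u := by
    rw [← PotSwap.lap_pair d n hd f hf v, ← PotSwap.lap_pair d n hd h hh u,
      PotSwap.green f _ hf, PotSwap.green h _ hh]
    refine Finset.sum_congr rfl fun i _ => tsum_congr fun x => ?_
    ring
  have hE := PotSwap.energy_bound hd hn h hh v hv (PotSwap.pot_self d n hd v)
  have hen : ∑ i, ∑' x, (h (x + PotSwap.ee i) - h x) ^ 2 = PotSwap.lap h v := by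
    have h1 := PotSwap.lap_pair d n hd h hh v
    rw [PotSwap.green h _ hh, show h v = 1 from PotSwap.pot_self d n hd v, one_mul] at h1
    simp only [sq]
    exact h1
  rw [hen] at hE
  have hlu : PotSwap.lap f u ≤ 2 * d := by
    have h1 : f u = 1 := PotSwap.pot_self d n hd u
    have h2 : 0 ≤ ∑ i, (f (u + PotSwap.ee i) + f (u - PotSwap.ee i)) :=
      Finset.sum_nonneg fun i _ =>
        add_nonneg (PotSwap.pot_nonneg d n u _) (PotSwap.pot_nonneg d n u _)
    rw [PotSwap.lap, h1]
    linarith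
  have hf0 : 0 ≤ f v := PotSwap.pot_nonneg d n u v
  have hh0 : 0 ≤ h u := PotSwap.pot_nonneg d n v u
  have h1 : f v * d ≤ f v * ((1 + 2 * Real.log n) * (2 * PotSwap.lap h v)) :=
    mul_le_mul_of_nonneg_left hE hf0
  have h2 : h u * PotSwap.lap f u ≤ h u * (2 * d) := mul_le_mul_of_nonneg_left hlu hh0
  have h3 : f v * ((1 + 2 * Real.log n) * (2 * PotSwap.lap h v)) =
      2 * (1 + 2 * Real.log n) * (h u * PotSwap.lap f u) := by rw [← hfv]; ring
  have h4 : 2 * (1 + 2 * Real.log n) * (h u * PotSwap.lap f u) ≤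
      2 * (1 + 2 * Real.log n) * (h u * (2 * d)) :=
    mul_le_mul_of_nonneg_left h2 (by linarith)
  have h5 : f v * d ≤ ((8 * Real.log n + 4) * h u) * d := by linarith
  exact le_of_mul_le_mul_right h5 hd'
end
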